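/- Let (X,T) be a topological dynamical system with a compatible metric d. Then mdim_M^+(T,X,d) = limsup_{ε→0} [ sup_{μ∈M(X,T)} ḥ^K_μ(T,ε) ] / log(1/ε) = limsup_{ε→0} [ sup_{μ∈M(X,T)} h̄^K_μ(T,ε) ] / log(1/ε), and mdim_M^-(T,X,d) = liminf_{ε→0} [ sup_{μ∈M(X,T)} ḥ^K_μ(T,ε) ] / log(1/ε) = liminf_{ε→0} [ sup_{μ∈M(X,T)} h̄^K_μ(T,ε) ] / log(1/ε), where the suprema are over all T-invariant Borel probability measures. -/

import Mathlib

open Filter MeasureTheory Set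
open scoped ENNReal Topology

noncomputable section

namespace MMD

variable {X : Type*}

/-- The `n`-th Bowen metric `d_n(x,y) = max_{0 ≤ j ≤ n-1} d(T^j x, T^j y)`. -/
noncomputable def bowenDist [PseudoMetricSpace X] (T : X → X) (n : ℕ) (x y : X) : ℝ :=
  ⨆ j : Fin n, dist (T^[(j : ℕ)] x) (T^[(j : ℕ)] y)

/-- `r_n(T,d,ε,Z)`: minimal cardinality of an `(n,ε)`-spanning set of `Z`. -/
noncomputable def spanNum [PseudoMetricSpace X] (T : X → X) (n : ℕ) (ε : ℝ) (Z : Set X) : ℕ :=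
  sInf {k | ∃ E : Finset X, E.card = k ∧ ∀ z ∈ Z, ∃ y ∈ E, bowenDist T n z y < ε}

/-- `s_n(T,d,ε,Z)`: maximal cardinality of an `(n,ε)`-separated subset of `Z`. -/
noncomputable def sepNum [PseudoMetricSpace X] (T : X → X) (n : ℕ) (ε : ℝ) (Z : Set X) : ℕ :=
  sSup {k | ∃ F : Finset X, ↑F ⊆ Z ∧ F.card = k ∧
    ∀ x ∈ F, ∀ y ∈ F, x ≠ y → ε ≤ bowenDist T n x y}

/-- `limsup_{n→∞} (1/n) log r_n(T,d,ε,X)`. -/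
noncomputable def spanGrowth [PseudoMetricSpace X] (T : X → X) (ε : ℝ) : ℝ≥0∞ :=
  Filter.limsup (fun n : ℕ => ENNReal.ofReal (Real.log (spanNum T n ε Set.univ)) / (n : ℝ≥0∞))
    Filter.atTop

/-- Upper metric mean dimension. -/
noncomputable def mdimMUpper [PseudoMetricSpace X] (T : X → X) : ℝ≥0∞ :=
  Filter.limsup (fun ε : ℝ => spanGrowth T ε / ENNReal.ofReal (Real.log (1 / ε)))
    (nhdsWithin 0 (Set.Ioi 0))

/-- Lower metric mean dimension. -/
noncomputable def mdimMLower [PseudoMetricSpace X] (T : X → X) : ℝ≥0∞ :=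
  Filter.liminf (fun ε : ℝ => spanGrowth T ε / ENNReal.ofReal (Real.log (1 / ε)))
    (nhdsWithin 0 (Set.Ioi 0))

/-- A finite (Borel) partition given as a finite set of measurable, pairwise disjoint sets
covering the space. -/
def IsFinPartition {Y : Type*} [MeasurableSpace Y] (P : Finset (Set Y)) : Prop :=
  (∀ s ∈ P, MeasurableSet s) ∧ (∀ s ∈ P, ∀ t ∈ P, s ≠ t → Disjoint s t) ∧
    ⋃₀ (P : Set (Set Y)) = Set.univ

/-- Mutual information `I(ξ;η)` of two random variables, as the supremum over finite
measurable partitions of the target spaces. -/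
noncomputable def mutualInfo {Ω A B : Type*} [MeasurableSpace Ω] [MeasurableSpace A]
    [MeasurableSpace B] (P : Measure Ω) (ξ : Ω → A) (η : Ω → B) : ℝ≥0∞ :=
  ⨆ (p : Finset (Set A)) (_ : IsFinPartition p) (q : Finset (Set B)) (_ : IsFinPartition q),
    ENNReal.ofReal (∑ s ∈ p, ∑ t ∈ q,
      (P (ξ ⁻¹' s ∩ η ⁻¹' t)).toReal *
        Real.log ((P (ξ ⁻¹' s ∩ η ⁻¹' t)).toReal /
          ((P (ξ ⁻¹' s)).toReal * (P (η ⁻¹' t)).toReal)))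

/-- The `L^∞` rate distortion function `R_{μ,L∞}(ε,s)`: the infimum of `I(ξ;η)/n` over all
`n ≥ 1` and all joint distributions `ν` of `(ξ, (η_0,…,η_{n-1}))` such that `ξ` has law `μ`,
the `η_k` take (almost surely) finitely many values, and
`E(#{0 ≤ k ≤ n-1 : d(T^k ξ, η_k) ≥ ε}) < s n`. -/
noncomputable def RDistLInftyS [PseudoMetricSpace X] [MeasurableSpace X] (T : X → X)
    (μ : Measure X) (ε s : ℝ) : ℝ≥0∞ :=
  ⨅ (n : ℕ) (_ : 0 < n) (ν : Measure (X × (Fin n → X))) (_ : IsProbabilityMeasure ν)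
    (_ : ν.map Prod.fst = μ) (_ : ∃ S : Finset X, ν {p | ∀ k, p.2 k ∈ S} = 1)
    (_ : ∫⁻ p, (Nat.card {k : Fin n // ε ≤ dist (T^[(k : ℕ)] p.1) (p.2 k)} : ℝ≥0∞) ∂ν
        < ENNReal.ofReal (s * n)),
    mutualInfo ν Prod.fst Prod.snd / (n : ℝ≥0∞)

/-- `R_{μ,L∞}(ε) = lim_{s→0} R_{μ,L∞}(ε,s)` (the limit equals the supremum over `s > 0`
by monotonicity). -/
noncomputable def RDistLInfty [PseudoMetricSpace X] [MeasurableSpace X] (T : X → X)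
    (μ : Measure X) (ε : ℝ) : ℝ≥0∞ :=
  ⨆ (s : ℝ) (_ : 0 < s), RDistLInftyS T μ ε s

/-- The `L¹` rate distortion function `R_{μ,1}(ε)`. -/
noncomputable def RDistL1 [PseudoMetricSpace X] [MeasurableSpace X] (T : X → X)
    (μ : Measure X) (ε : ℝ) : ℝ≥0∞ :=
  ⨅ (n : ℕ) (_ : 0 < n) (ν : Measure (X × (Fin n → X))) (_ : IsProbabilityMeasure ν)
    (_ : ν.map Prod.fst = μ) (_ : ∃ S : Finset X, ν {p | ∀ k, p.2 k ∈ S} = 1)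
    (_ : ∫⁻ p, ∑ k : Fin n, ENNReal.ofReal (dist (T^[(k : ℕ)] p.1) (p.2 k)) ∂ν
        < ENNReal.ofReal (ε * n)),
    mutualInfo ν Prod.fst Prod.snd / (n : ℝ≥0∞)

/-- `R^δ_μ(T,n,ε)`: minimal number of Bowen `(n,ε)`-balls whose union has `μ`-measure
greater than `1 - δ`. -/
noncomputable def katokNum [PseudoMetricSpace X] [MeasurableSpace X] (T : X → X)
    (μ : Measure X) (n : ℕ) (ε δ : ℝ) : ℕ :=
  sInf {k | ∃ E : Finset X, E.card = k ∧
    ENNReal.ofReal (1 - δ) < μ (⋃ x ∈ E, {y | bowenDist T n x y < ε})}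

/-- `h̄^K_μ(T,ε,δ)`. -/
noncomputable def katokUpperD [PseudoMetricSpace X] [MeasurableSpace X] (T : X → X)
    (μ : Measure X) (ε δ : ℝ) : ℝ≥0∞ :=
  Filter.limsup (fun n : ℕ => ENNReal.ofReal (Real.log (katokNum T μ n ε δ)) / (n : ℝ≥0∞))
    Filter.atTop

/-- `ḥ^K_μ(T,ε,δ)`. -/
noncomputable def katokLowerD [PseudoMetricSpace X] [MeasurableSpace X] (T : X → X)
    (μ : Measure X) (ε δ : ℝ) : ℝ≥0∞ :=
  Filter.liminf (fun n : ℕ => ENNReal.ofReal (Real.log (katokNum T μ n ε δ)) / (n : ℝ≥0∞))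
    Filter.atTop

/-- `h̄^K_μ(T,ε) = lim_{δ→0} h̄^K_μ(T,ε,δ)` (equal to the supremum over `δ ∈ (0,1)` by
monotonicity). -/
noncomputable def katokUpper [PseudoMetricSpace X] [MeasurableSpace X] (T : X → X)
    (μ : Measure X) (ε : ℝ) : ℝ≥0∞ :=
  ⨆ (δ : ℝ) (_ : δ ∈ Set.Ioo (0 : ℝ) 1), katokUpperD T μ ε δ

/-- `ḥ^K_μ(T,ε) = lim_{δ→0} ḥ^K_μ(T,ε,δ)`. -/
noncomputable def katokLower [PseudoMetricSpace X] [MeasurableSpace X] (T : X → X)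
    (μ : Measure X) (ε : ℝ) : ℝ≥0∞ :=
  ⨆ (δ : ℝ) (_ : δ ∈ Set.Ioo (0 : ℝ) 1), katokLowerD T μ ε δ

/-- The empirical measure `(1/n) Σ_{j=0}^{n-1} δ_{T^j x}`. -/
noncomputable def empMeas [MeasurableSpace X] (T : X → X) (n : ℕ) (x : X) : Measure X :=
  (n : ℝ≥0∞)⁻¹ • ∑ j ∈ Finset.range n, Measure.dirac (T^[j] x)

/-- Pfister–Sullivan entropy `PS_μ(T,d,ε)`: infimum over weak* open neighborhoods `F` of `μ`
of `limsup_n (1/n) log s_n(T,d,ε,X_{n,F})`, where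
`X_{n,F} = {x : (1/n) Σ_{j<n} δ_{T^j x} ∈ F}`. -/
noncomputable def PSent [MetricSpace X] [MeasurableSpace X] [OpensMeasurableSpace X]
    (T : X → X) (μ : ProbabilityMeasure X) (ε : ℝ) : ℝ≥0∞ :=
  ⨅ (F : Set (ProbabilityMeasure X)) (_ : IsOpen F) (_ : μ ∈ F),
    Filter.limsup (fun n : ℕ => ENNReal.ofReal (Real.log (sepNum T n ε
      {x : X | ∃ h : IsProbabilityMeasure (empMeas T n x),
        (⟨empMeas T n x, h⟩ : ProbabilityMeasure X) ∈ F})) / (n : ℝ≥0∞)) Filter.atTop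

/-- Partition entropy `H_μ(P) = Σ_{A∈P} -μ(A) log μ(A)`. -/
noncomputable def entP [MeasurableSpace X] (μ : Measure X) (P : Finset (Set X)) : ℝ≥0∞ :=
  ∑ A ∈ P, ENNReal.ofReal (-((μ A).toReal * Real.log ((μ A).toReal)))

/-- The join `P^n = ∨_{j=0}^{n-1} T^{-j} P`. -/
noncomputable def joinN (T : X → X) (P : Finset (Set X)) (n : ℕ) : Finset (Set X) :=
  letI : DecidableEq (Set X) := Classical.decEq _
  (Fintype.piFinset (fun _ : Fin n => P)).image (fun f => ⋂ j : Fin n, T^[(j : ℕ)] ⁻¹' f j)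

/-- `h_μ(T,P) = lim_n H_μ(P^n)/n` (the limit exists and equals the liminf). -/
noncomputable def entRate [MeasurableSpace X] (T : X → X) (μ : Measure X)
    (P : Finset (Set X)) : ℝ≥0∞ :=
  Filter.liminf (fun n : ℕ => entP μ (joinN T P n) / (n : ℝ≥0∞)) Filter.atTop

/-- `inf { h_μ(T,P) : P a finite Borel partition with diam P ≤ ε }`. -/
noncomputable def infEntRate [PseudoMetricSpace X] [MeasurableSpace X] (T : X → X)
    (μ : Measure X) (ε : ℝ) : ℝ≥0∞ :=
  ⨅ (P : Finset (Set X)) (_ : IsFinPartition P) (_ : ∀ s ∈ P, Metric.diam s ≤ ε),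
    entRate T μ P

/-- Kolmogorov–Sinai entropy `h_μ(T)`. -/
noncomputable def ksEntropy [MeasurableSpace X] (T : X → X) (μ : Measure X) : ℝ≥0∞ :=
  ⨆ (P : Finset (Set X)) (_ : IsFinPartition P), entRate T μ P

/-- A finite open cover. -/
def IsFinOpenCover [TopologicalSpace X] (α : Finset (Set X)) : Prop :=
  (∀ A ∈ α, IsOpen A) ∧ ⋃₀ (α : Set (Set X)) = Set.univ

/-- `ord(β) = max_x #{B ∈ β : x ∈ B} - 1`. -/
noncomputable def ordCover (β : Finset (Set X)) : ℕ :=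
  sSup {k | ∃ x : X, Nat.card {B : Set X // B ∈ β ∧ x ∈ B} = k} - 1

/-- `D(α) = min_{β ≻ α} ord(β)`, over finite open covers `β` refining `α`. -/
noncomputable def Dcover [TopologicalSpace X] (α : Finset (Set X)) : ℕ :=
  sInf {k | ∃ β : Finset (Set X), IsFinOpenCover β ∧ (∀ B ∈ β, ∃ A ∈ α, B ⊆ A) ∧
    ordCover β = k}

/-- Mean (topological) dimension `mdim(X,T) = sup_α lim_n D(α^n)/n`. -/
noncomputable def mdimTop [TopologicalSpace X] (T : X → X) : ℝ≥0∞ :=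
  ⨆ (α : Finset (Set X)) (_ : IsFinOpenCover α),
    Filter.liminf (fun n : ℕ => (Dcover (joinN T α n) : ℝ≥0∞) / (n : ℝ≥0∞)) Filter.atTop

/-- The marker property for a homeomorphism. -/
def MarkerProperty [TopologicalSpace X] (T : X ≃ₜ X) : Prop :=
  ∀ N : ℕ, 0 < N → ∃ U : Set X, IsOpen U ∧
    (∀ n : ℕ, 1 ≤ n → n ≤ N → U ∩ (⇑T)^[n] '' U = ∅) ∧
    ⋃ n : ℤ, ⇑(T.toEquiv ^ n) '' U = Set.univ

/-- Upper dimension `limsup_{ε→0} F(μ,ε)/log(1/ε)` associated with a candidate `F`. -/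
noncomputable def dimFUpper [MeasurableSpace X] (F : Measure X → ℝ → ℝ≥0∞)
    (μ : Measure X) : ℝ≥0∞ :=
  Filter.limsup (fun ε : ℝ => F μ ε / ENNReal.ofReal (Real.log (1 / ε)))
    (nhdsWithin 0 (Set.Ioi 0))

/-- Lower dimension `liminf_{ε→0} F(μ,ε)/log(1/ε)` associated with a candidate `F`. -/
noncomputable def dimFLower [MeasurableSpace X] (F : Measure X → ℝ → ℝ≥0∞)
    (μ : Measure X) : ℝ≥0∞ :=
  Filter.liminf (fun ε : ℝ => F μ ε / ENNReal.ofReal (Real.log (1 / ε)))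
    (nhdsWithin 0 (Set.Ioi 0))

/-- A candidate function: for each invariant probability measure `μ`, `F(μ,·)` is
non-decreasing as `ε` decreases, and `F(μ,ε) → h_μ(T)` as `ε → 0⁺`. -/
def IsCandidate [MeasurableSpace X] (T : X → X) (F : Measure X → ℝ → ℝ≥0∞) : Prop :=
  ∀ μ : Measure X, IsProbabilityMeasure μ → MeasurePreserving T μ μ →
    (∀ ε₁ ε₂ : ℝ, 0 < ε₁ → ε₁ ≤ ε₂ → F μ ε₂ ≤ F μ ε₁) ∧
    Filter.Tendsto (F μ) (nhdsWithin 0 (Set.Ioi 0)) (nhds (ksEntropy T μ))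

end MMD

open MMD

/-!
Let `F n` be a maximal `(n, ε)`-separated set, so that `F n` is also `(n, ε)`-spanning, and let
`μ` be a limit of the orbit averages of the uniform measures on `F n`; it is invariant. If `E` is
a smallest set whose Bowen `(m, ε/2)`-balls cover a set `U` of `μ`-measure greater than `1 - δ`,
then for large `n` along the limit at least half of the orbits starting in `F n` leave `U` at
most `2 δ n` times before time `n`. Such an orbit is determined by about `n / m` choices of a
point of `E` and `2 δ n` choices of a point of an `ε/2`-net of `X`, which bounds the growth rate
of `log #(F n)`, hence of `log r_n(ε)`, by the lower Katok entropy of `μ` at scale `ε/2`.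
Conversely a spanning set of `X` covers all of every invariant measure, so the upper Katok
entropy at scale `ε` is at most the growth rate of `log r_n(ε)`. Finally `log (2/ε) ∼ log (1/ε)`,
so the loss of a factor `2` in the scale disappears.
-/

namespace MMD

open ProbabilityTheory
open scoped Finset BoundedContinuousFunction

variable {X : Type*}

section BowenMetric

variable [PseudoMetricSpace X] {T : X → X}

/-- The initial orbit segment `(x, T x, …, T^(n-1) x)`. With the sup metric on `Fin n → X` it turns
the `n`-th Bowen metric into an ordinary distance. -/
def orbitSegment (T : X → X) (n : ℕ) (x : X) : Fin n → X := fun j => T^[j] x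

lemma bowenDist_eq_dist_orbitSegment (T : X → X) (n : ℕ) (x y : X) :
    bowenDist T n x y = dist (orbitSegment T n x) (orbitSegment T n y) := by
  apply le_antisymm
  · exact Real.iSup_le (fun j => dist_le_pi_dist (orbitSegment T n x) (orbitSegment T n y) j)
      dist_nonneg
  · exact (dist_pi_le_iff (Real.iSup_nonneg fun _ => dist_nonneg)).2
      (le_ciSup (Set.finite_range _).bddAbove)

lemma bowenDist_self (T : X → X) (n : ℕ) (x : X) : bowenDist T n x x = 0 := by
  rw [bowenDist_eq_dist_orbitSegment, dist_self]

lemma bowenDist_comm (T : X → X) (n : ℕ) (x y : X) : bowenDist T n x y = bowenDist T n y x := by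
  simp only [bowenDist_eq_dist_orbitSegment, dist_comm]

lemma bowenDist_triangle_left (T : X → X) (n : ℕ) (x y z : X) :
    bowenDist T n x y ≤ bowenDist T n z x + bowenDist T n z y := by
  simpa only [bowenDist_eq_dist_orbitSegment] using dist_triangle_left _ _ _

lemma bowenDist_zero (T : X → X) (x y : X) : bowenDist T 0 x y = 0 :=
  Real.iSup_of_isEmpty _

lemma bowenDist_one (T : X → X) (x y : X) : bowenDist T 1 x y = dist x y := by
  simp [bowenDist]

lemma dist_iterate_le_bowenDist (T : X → X) {n j : ℕ} (hj : j < n) (x y : X) :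
    dist (T^[j] x) (T^[j] y) ≤ bowenDist T n x y := by
  rw [bowenDist_eq_dist_orbitSegment]
  exact dist_le_pi_dist (orbitSegment T n x) (orbitSegment T n y) ⟨j, hj⟩

lemma bowenDist_add_le (T : X → X) (k n : ℕ) (x y : X) :
    bowenDist T (k + n) x y ≤ max (bowenDist T k x y) (bowenDist T n (T^[k] x) (T^[k] y)) := by
  have nonneg : 0 ≤ max (bowenDist T k x y) (bowenDist T n (T^[k] x) (T^[k] y)) :=
    le_max_of_le_left (Real.iSup_nonneg fun _ => dist_nonneg)
  refine Real.iSup_le (fun ⟨j, hj⟩ => ?_) nonneg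
  obtain hjk | ⟨i, rfl⟩ := (lt_or_ge j k).imp_right Nat.exists_eq_add_of_le'
  · exact le_max_of_le_left (dist_iterate_le_bowenDist T hjk x y)
  · simp only [Function.iterate_add_apply]
    exact le_max_of_le_right (dist_iterate_le_bowenDist T (by lia) _ _)

lemma continuous_bowenDist (hT : Continuous T) (n : ℕ) (x : X) :
    Continuous fun y => bowenDist T n x y := by
  simp only [bowenDist_eq_dist_orbitSegment]
  exact continuous_const.dist (continuous_pi fun j => hT.iterate j)

lemma isOpen_iUnion_bowenDist_lt (hT : Continuous T) (n : ℕ) (ε : ℝ) (E : Finset X) :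
    IsOpen (⋃ x ∈ E, {y | bowenDist T n x y < ε}) :=
  isOpen_biUnion fun x _ => isOpen_lt (continuous_bowenDist hT n x) continuous_const

end BowenMetric

section Separated

variable [PseudoMetricSpace X] {T : X → X} {n k : ℕ} {ε : ℝ}

/-- `F` is `(n, ε)`-separated: distinct points of `F` are at Bowen distance at least `ε`. -/
def IsBowenSeparated (T : X → X) (n : ℕ) (ε : ℝ) (F : Set X) : Prop :=
  F.Pairwise fun x y => ε ≤ bowenDist T n x y

lemma IsBowenSeparated.mono {F G : Set X} (hGF : G ⊆ F) (hF : IsBowenSeparated T n ε F) :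
    IsBowenSeparated T n ε G :=
  Set.Pairwise.mono hGF hF

lemma le_bowenDist_iterate {x y : X} (hxy : ε ≤ bowenDist T (k + n) x y)
    (hlt : bowenDist T k x y < ε) : ε ≤ bowenDist T n (T^[k] x) (T^[k] y) :=
  (le_max_iff.1 (hxy.trans (bowenDist_add_le T k n x y))).resolve_left hlt.not_ge

lemma IsBowenSeparated.image_iterate {F : Set X} (hF : IsBowenSeparated T (k + n) ε F)
    (hclose : ∀ x ∈ F, ∀ y ∈ F, bowenDist T k x y < ε) :
    F.InjOn T^[k] ∧ IsBowenSeparated T n ε (T^[k] '' F) := by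
  have far : ∀ x ∈ F, ∀ y ∈ F, x ≠ y → ε ≤ bowenDist T n (T^[k] x) (T^[k] y) :=
    fun x hx y hy hne => le_bowenDist_iterate (hF hx hy hne) (hclose x hx y hy)
  constructor
  · intro x hx y hy heq
    by_contra hne
    have hε : 0 < ε := bowenDist_self T k x ▸ hclose x hx x hx
    have hle : ε ≤ 0 := bowenDist_self T n (T^[k] y) ▸ heq ▸ far x hx y hy hne
    exact hle.not_gt hε
  · rintro _ ⟨x, hx, rfl⟩ _ ⟨y, hy, rfl⟩ hne
    exact far x hx y hy (ne_of_apply_ne _ hne)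

lemma IsBowenSeparated.card_le_mul {F E : Finset X} {M : ℕ} (hF : IsBowenSeparated T (k + n) ε F)
    (hE : ∀ x ∈ F, ∃ y ∈ E, bowenDist T k y x < ε / 2)
    (hM : ∀ G : Finset X, (G : Set X) ⊆ T^[k] '' F → IsBowenSeparated T n ε G → #G ≤ M) :
    #F ≤ M * #E := by
  classical
  choose! code hcode hclose using hE
  refine Finset.card_le_mul_card_image_of_maps_to hcode _ fun y _ => ?_
  set B := {x ∈ F | code x = y} with hB
  have hBF : (B : Set X) ⊆ F := Finset.coe_subset.2 (Finset.filter_subset _ _)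
  have hBclose : ∀ x ∈ (B : Set X), ∀ z ∈ (B : Set X), bowenDist T k x z < ε := by
    intro x hx z hz
    obtain ⟨hxF, rfl⟩ := Finset.mem_filter.1 hx
    obtain ⟨hzF, hzy⟩ := Finset.mem_filter.1 hz
    have hz := hclose z hzF
    rw [hzy] at hz
    linarith [bowenDist_triangle_left T k x z (code x), hclose x hxF]
  obtain ⟨hinj, hsep⟩ := (hF.mono hBF).image_iterate hBclose
  rw [← Finset.card_image_of_injOn hinj]
  rw [← Finset.coe_image] at hsep
  refine hM _ ?_ hsep
  rw [Finset.coe_image]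
  exact image_mono hBF

lemma IsBowenSeparated.card_le_one {F : Finset X} (hε : 0 < ε) (hF : IsBowenSeparated T 0 ε F) :
    #F ≤ 1 := by
  refine Finset.card_le_one.2 fun x hx y hy => ?_
  by_contra hne
  have hle : ε ≤ 0 := (hF hx hy hne).trans_eq (bowenDist_zero T x y)
  exact hle.not_gt hε

lemma IsBowenSeparated.card_le_pow {C : Finset X} (hε : 0 < ε)
    (hC : ∀ x, ∃ c ∈ C, dist c x < ε / 2) :
    ∀ (n : ℕ) {F : Finset X}, IsBowenSeparated T n ε F → #F ≤ #C ^ n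
  | 0, _, hF => hF.card_le_one hε
  | n + 1, F, hF => by
    rw [pow_succ]
    refine IsBowenSeparated.card_le_mul (n := n) (k := 1) (T := T) (ε := ε) ?_ ?_ ?_
    · rwa [add_comm]
    · simpa only [bowenDist_one] using fun x _ => hC x
    · exact fun G _ hG => hG.card_le_pow hε hC n

lemma exists_finset_forall_dist_lt [CompactSpace X] (hε : 0 < ε) :
    ∃ C : Finset X, ∀ x, ∃ c ∈ C, dist c x < ε := by
  obtain ⟨C, -, hC, hcover⟩ := finite_cover_balls_of_compact (isCompact_univ (X := X)) hε
  refine ⟨hC.toFinset, fun x => ?_⟩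
  simpa [dist_comm] using hcover (mem_univ x)

lemma exists_isBowenSeparated_forall_bowenDist_lt [CompactSpace X] (T : X → X) (n : ℕ)
    (hε : 0 < ε) :
    ∃ F : Finset X, IsBowenSeparated T n ε F ∧ ∀ z, ∃ y ∈ F, bowenDist T n z y < ε := by
  classical
  obtain ⟨C, hC⟩ := exists_finset_forall_dist_lt (X := X) (half_pos hε)
  obtain ⟨F, hF, hmax⟩ : ∃ F : Finset X, IsBowenSeparated T n ε F ∧
      ∀ G : Finset X, IsBowenSeparated T n ε G → #G ≤ #F := by
    obtain ⟨_, ⟨F, hF, rfl⟩, hmax⟩ := BddAbove.exists_isGreatest_of_nonempty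
      (S := Finset.card '' {F : Finset X | IsBowenSeparated T n ε F})
      ⟨#C ^ n, by rintro _ ⟨F, hF, rfl⟩; exact hF.card_le_pow hε hC n⟩
      ⟨0, ∅, by simp [IsBowenSeparated], rfl⟩
    exact ⟨F, hF, fun G hG => hmax ⟨G, hG, rfl⟩⟩
  refine ⟨F, hF, fun z => ?_⟩
  by_contra! hfar
  have hz : z ∉ F := fun hz => (bowenDist_self T n z ▸ hfar z hz).not_gt hε
  have hinsert : IsBowenSeparated T n ε (insert z F : Finset X) := by
    rw [Finset.coe_insert]
    exact hF.insert_of_notMem hz fun y hy => ⟨hfar y hy, bowenDist_comm T n z y ▸ hfar y hy⟩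
  exact absurd (hmax _ hinsert) (by simp [hz])

end Separated

section VisitCount

variable {T : X → X} {V : Set X}

/-- The number of times `j < n` at which the orbit of `x` under `T` lies in `V`. -/
def visitCount (T : X → X) (V : Set X) (n : ℕ) (x : X) : ℕ :=
  birkhoffSum T (V.indicator 1) n x

lemma visitCount_add (T : X → X) (V : Set X) (k n : ℕ) (x : X) :
    visitCount T V (k + n) x = visitCount T V k x + visitCount T V n (T^[k] x) :=
  birkhoffSum_add T _ k n x

lemma visitCount_one_add_of_mem (T : X → X) (n : ℕ) {x : X} (hx : x ∈ V) :
    visitCount T V (1 + n) x = 1 + visitCount T V n (T^[1] x) := by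
  have hone : visitCount T V 1 x = 1 := by simp [visitCount, hx]
  rw [visitCount_add, hone]

lemma visitCount_iterate_le {k n b : ℕ} {x : X} (hx : visitCount T V (k + n) x ≤ b) :
    visitCount T V n (T^[k] x) ≤ b :=
  (Nat.le_add_left _ _).trans (visitCount_add T V k n x ▸ hx)

variable [PseudoMetricSpace X] {ε : ℝ} {C E F : Finset X} {m n b M : ℕ}

lemma IsBowenSeparated.card_le_mul_of_visitCount_le {k : ℕ}
    (hF : IsBowenSeparated T (k + n) ε F) (hE : ∀ x ∈ F, ∃ y ∈ E, bowenDist T k y x < ε / 2)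
    (hb : ∀ x ∈ F, visitCount T V n (T^[k] x) ≤ b)
    (hM : ∀ G : Finset X, IsBowenSeparated T n ε G → (∀ z ∈ G, visitCount T V n z ≤ b) → #G ≤ M) :
    #F ≤ M * #E := by
  refine hF.card_le_mul hE fun G hG hsep => hM G hsep fun z hz => ?_
  obtain ⟨x, hx, rfl⟩ := hG hz
  exact hb x hx

-- An orbit segment is coded greedily: off `V` the next `m` steps are recorded by one point of `E`,
-- on `V` the next step is recorded by one point of `C`. The factors `2` record which case occurs,
-- and `#C ^ m` accounts for the final fewer than `m` steps.
lemma IsBowenSeparated.card_le_of_visitCount_le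
    (hm : 0 < m) (hε : 0 < ε) (hC : ∀ x, ∃ c ∈ C, dist c x < ε / 2)
    (hE : ∀ x ∉ V, ∃ y ∈ E, bowenDist T m y x < ε / 2) (hE₀ : E.Nonempty)
    (hF : IsBowenSeparated T n ε F) (hb : ∀ x ∈ F, visitCount T V n x ≤ b) :
    #F ≤ #C ^ m * (2 * #E) ^ (n / m) * (2 * #C) ^ b := by
  classical
  induction n using Nat.strong_induction_on generalizing F b with
  | _ n ih =>
  obtain rfl | ⟨x₀, -⟩ := F.eq_empty_or_nonempty
  · simp
  have hC₁ : 1 ≤ #C := Finset.card_pos.2 ⟨_, (hC x₀).choose_spec.1⟩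
  have hE₁ : 1 ≤ 2 * #E := by have := hE₀.card_pos; lia
  obtain hnm | hmn := lt_or_ge n m
  · calc #F ≤ #C ^ m := (hF.card_le_pow hε hC n).trans (Nat.pow_le_pow_right hC₁ hnm.le)
      _ ≤ #C ^ m * ((2 * #E) ^ (n / m) * (2 * #C) ^ b) := Nat.le_mul_of_pos_right _ (by positivity)
      _ = _ := (mul_assoc _ _ _).symm
  have hoff : #{x ∈ F | x ∉ V} * 2 ≤ #C ^ m * (2 * #E) ^ (n / m) * (2 * #C) ^ b := by
    obtain ⟨k, rfl⟩ := Nat.exists_eq_add_of_le hmn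
    have hcard : #{x ∈ F | x ∉ V} ≤ #C ^ m * (2 * #E) ^ (k / m) * (2 * #C) ^ b * #E :=
      (hF.mono (Finset.filter_subset _ F)).card_le_mul_of_visitCount_le
        (fun x hx => hE x (Finset.mem_filter.1 hx).2)
        (fun x hx => visitCount_iterate_le (hb x (Finset.mem_of_mem_filter x hx)))
        (fun G => ih k (by lia))
    calc _ ≤ #C ^ m * (2 * #E) ^ (k / m) * (2 * #C) ^ b * #E * 2 := by gcongr
      _ = _ := by rw [Nat.add_div_left k hm]; ring
  have hon : #{x ∈ F | x ∈ V} * 2 ≤ #C ^ m * (2 * #E) ^ (n / m) * (2 * #C) ^ b := by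
    obtain hempty | ⟨x₁, hx₁⟩ := {x ∈ F | x ∈ V}.eq_empty_or_nonempty
    · simp [hempty]
    obtain ⟨k, rfl⟩ : ∃ k, n = 1 + k := Nat.exists_eq_add_of_le (hm.trans_le hmn)
    have hvisit (x) (hx : x ∈ {x ∈ F | x ∈ V}) : 1 + visitCount T V k (T^[1] x) ≤ b :=
      visitCount_one_add_of_mem T k (Finset.mem_filter.1 hx).2 ▸
        hb x (Finset.mem_of_mem_filter x hx)
    obtain ⟨b, rfl⟩ := Nat.exists_eq_add_of_le ((Nat.le_add_right _ _).trans (hvisit x₁ hx₁))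
    have hcard : #{x ∈ F | x ∈ V} ≤ #C ^ m * (2 * #E) ^ (k / m) * (2 * #C) ^ b * #C :=
      (hF.mono (Finset.filter_subset _ F)).card_le_mul_of_visitCount_le
        (fun x _ => by simpa only [bowenDist_one] using hC x)
        (fun x hx => Nat.le_of_add_le_add_left (hvisit x hx))
        (fun G => ih k (by lia))
    calc _ ≤ #C ^ m * (2 * #E) ^ (k / m) * (2 * #C) ^ b * #C * 2 := by gcongr
      _ = #C ^ m * (2 * #E) ^ (k / m) * (2 * #C) ^ (1 + b) := by ring
      _ ≤ _ := by gcongr; exact Nat.le_add_left _ _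
  have := Finset.card_filter_add_card_filter_not (s := F) (· ∈ V)
  lia

end VisitCount

section OrbitAverage

variable [MeasurableSpace X] {T : X → X} {n : ℕ}

/-- The average `(1/n) ∑_{j<n} (T^j)_* σ` of the first `n` push-forwards of `σ`, the measure to
which the Krylov–Bogolyubov argument is applied. It is the zero measure when `n = 0`. -/
def orbitAverage (T : X → X) (n : ℕ) (σ : Measure X) : Measure X :=
  (n : ℝ≥0∞)⁻¹ • ∑ j ∈ Finset.range n, σ.map T^[j]

lemma isProbabilityMeasure_orbitAverage (hT : Measurable T) (hn : n ≠ 0) (σ : Measure X)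
    [IsProbabilityMeasure σ] : IsProbabilityMeasure (orbitAverage T n σ) := by
  have hmap (j : ℕ) : σ.map T^[j] univ = 1 := by
    rw [Measure.map_apply (hT.iterate j) .univ, preimage_univ, measure_univ]
  constructor
  simp [orbitAverage, hmap, ENNReal.inv_mul_cancel, hn]

lemma map_orbitAverage_add (hT : Measurable T) (n : ℕ) (σ : Measure X) :
    (orbitAverage T n σ).map T + (n : ℝ≥0∞)⁻¹ • σ =
      orbitAverage T n σ + (n : ℝ≥0∞)⁻¹ • σ.map T^[n] := by
  have hmap (j : ℕ) : (σ.map T^[j]).map T = σ.map T^[j + 1] := by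
    rw [Measure.map_map hT (hT.iterate j), Function.iterate_succ']
  have hsum : (∑ j ∈ Finset.range n, σ.map T^[j]).map T + σ =
      ∑ j ∈ Finset.range n, σ.map T^[j] + σ.map T^[n] := by
    rw [← Finset.sum_range_succ, Finset.sum_range_succ', ← Measure.mapₗ_apply_of_measurable hT,
      map_sum]
    simp only [Measure.mapₗ_apply_of_measurable hT, hmap, Function.iterate_zero, Measure.map_id]
  rw [orbitAverage, Measure.map_smul, ← smul_add, ← smul_add, hsum]

lemma abs_integral_map_orbitAverage_sub_le [TopologicalSpace X] [OpensMeasurableSpace X]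
    (hT : Measurable T) (n : ℕ) (σ : Measure X) [IsProbabilityMeasure σ] (f : X →ᵇ ℝ) :
    |∫ x, f x ∂(orbitAverage T n σ).map T - ∫ x, f x ∂orbitAverage T n σ| ≤ 2 * ‖f‖ / n := by
  obtain rfl | hn := eq_or_ne n 0
  · simp [orbitAverage]
  have := isProbabilityMeasure_orbitAverage hT hn σ
  have := Measure.isProbabilityMeasure_map (μ := orbitAverage T n σ) hT.aemeasurable
  have := Measure.isProbabilityMeasure_map (μ := σ) (hT.iterate n).aemeasurable
  have hinv : (n : ℝ≥0∞)⁻¹ ≠ ∞ := by simpa using hn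
  have hint := congrArg (fun ν => ∫ x, f x ∂ν) (map_orbitAverage_add hT n σ)
  simp only [integral_add_measure (f.integrable _) ((f.integrable _).smul_measure hinv),
    integral_smul_measure, ENNReal.toReal_inv, ENNReal.toReal_natCast, smul_eq_mul] at hint
  have hdiff : ∫ x, f x ∂(orbitAverage T n σ).map T - ∫ x, f x ∂orbitAverage T n σ =
      (∫ x, f x ∂σ.map T^[n] - ∫ x, f x ∂σ) / n := by
    rw [sub_div, div_eq_inv_mul, div_eq_inv_mul]
    linarith
  rw [hdiff, abs_div, Nat.abs_cast]
  gcongr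
  calc |∫ x, f x ∂σ.map T^[n] - ∫ x, f x ∂σ|
      ≤ ‖∫ x, f x ∂σ.map T^[n]‖ + ‖∫ x, f x ∂σ‖ := abs_sub _ _
    _ ≤ 2 * ‖f‖ := by linarith [f.norm_integral_le_norm (σ.map T^[n]), f.norm_integral_le_norm σ]

lemma lintegral_visitCount (hT : Measurable T) (n : ℕ) (σ : Measure X) {V : Set X}
    (hV : MeasurableSet V) :
    ∫⁻ x, visitCount T V n x ∂σ = n * orbitAverage T n σ V := by
  classical
  have hcount (x : X) : (visitCount T V n x : ℝ≥0∞) =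
      ∑ j ∈ Finset.range n, (T^[j] ⁻¹' V).indicator 1 x := by
    simp [visitCount, birkhoffSum, Set.indicator_apply]
  have hsum : ∫⁻ x, visitCount T V n x ∂σ = ∑ j ∈ Finset.range n, σ.map T^[j] V := by
    simp_rw [hcount]
    rw [lintegral_finsetSum _ fun j _ => measurable_one.indicator (hT.iterate j hV)]
    refine Finset.sum_congr rfl fun j _ => ?_
    rw [lintegral_indicator_one (hT.iterate j hV), Measure.map_apply (hT.iterate j) hV]
  obtain rfl | hn := eq_or_ne n 0
  · simp [visitCount]
  rw [hsum, orbitAverage, Measure.smul_apply, Measure.finsetSum_apply, smul_eq_mul,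
    ENNReal.mul_inv_cancel_left (by simpa using hn) (by simp)]

lemma measurable_visitCount (hT : Measurable T) {V : Set X} (hV : MeasurableSet V) (n : ℕ) :
    Measurable (visitCount T V n) := by
  unfold visitCount birkhoffSum
  exact Finset.measurable_fun_sum _ fun j _ => (measurable_one.indicator hV).comp (hT.iterate j)

lemma measure_two_mul_le_visitCount_le (hT : Measurable T) (hn : n ≠ 0) {σ : Measure X}
    {V : Set X} (hV : MeasurableSet V) {δ : ℝ≥0∞} (hδ : δ ≠ 0) (hδ' : δ ≠ ∞)
    (hσ : orbitAverage T n σ V ≤ δ) :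
    σ {x | 2 * (n * δ) ≤ visitCount T V n x} ≤ 2⁻¹ := by
  have hn₀ : (n : ℝ≥0∞) ≠ 0 := by exact_mod_cast hn
  have hnδ : n * δ ≠ 0 := mul_ne_zero hn₀ hδ
  have hnδ' : n * δ ≠ ∞ := ENNReal.mul_ne_top (by simp) hδ'
  calc σ {x | 2 * (n * δ) ≤ visitCount T V n x}
      ≤ (∫⁻ x, visitCount T V n x ∂σ) / (2 * (n * δ)) :=
        meas_ge_le_lintegral_div
          (measurable_from_nat.comp (measurable_visitCount hT hV n)).aemeasurable
          (mul_ne_zero two_ne_zero hnδ) (ENNReal.mul_ne_top (by simp) hnδ')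
    _ ≤ n * δ / (2 * (n * δ)) := by rw [lintegral_visitCount hT n σ hV]; gcongr
    _ = 2⁻¹ := by
        rw [ENNReal.div_eq_inv_mul, ENNReal.mul_inv (by simp) (by simp), mul_assoc,
          ENNReal.inv_mul_cancel hnδ hnδ', mul_one]

lemma card_le_two_mul_card_filter_visitCount_le [MeasurableSingletonClass X] (hT : Measurable T)
    (hn : n ≠ 0) {F : Finset X} {V : Set X} (hV : MeasurableSet V) {δ : ℝ} (hδ : 0 < δ)
    (hF : orbitAverage T n (uniformOn (F : Set X)) V ≤ ENNReal.ofReal δ) :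
    #F ≤ 2 * #{x ∈ F | visitCount T V n x ≤ ⌊2 * (n * δ)⌋₊} := by
  classical
  obtain rfl | hF₀ := F.eq_empty_or_nonempty
  · simp
  set B : Finset X := {x ∈ F | ¬ visitCount T V n x ≤ ⌊2 * (n * δ)⌋₊}
  have hB : (B : Set X) ⊆ {x | 2 * (n * ENNReal.ofReal δ) ≤ visitCount T V n x} := by
    intro x hx
    have hlt : 2 * (n * δ) < visitCount T V n x :=
      Nat.lt_of_floor_lt (not_le.1 (Finset.mem_filter.1 hx).2)
    have hle := ENNReal.ofReal_le_ofReal hlt.le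
    rwa [ENNReal.ofReal_mul zero_le_two, ENNReal.ofReal_mul n.cast_nonneg, ENNReal.ofReal_natCast,
      ENNReal.ofReal_natCast, ENNReal.ofReal_ofNat] at hle
  have hhalf : (#B : ℝ≥0∞) / #F ≤ 2⁻¹ := by
    calc (#B : ℝ≥0∞) / #F = uniformOn (F : Set X) B := by
          rw [uniformOn_apply_finset, Finset.inter_eq_right.2 (Finset.filter_subset _ F)]
      _ ≤ 2⁻¹ := (measure_mono hB).trans <| measure_two_mul_le_visitCount_le hT hn hV
          (ENNReal.ofReal_pos.2 hδ).ne' ENNReal.ofReal_ne_top hF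
  have hcard : 2 * #B ≤ #F := by
    rw [ENNReal.div_le_iff (by simpa using hF₀.ne_empty) (by simp), ← ENNReal.div_eq_inv_mul,
      ENNReal.le_div_iff_mul_le (by simp) (by simp), mul_comm] at hhalf
    exact_mod_cast hhalf
  have hsplit :=
    Finset.card_filter_add_card_filter_not (s := F) (visitCount T V n · ≤ ⌊2 * (n * δ)⌋₊)
  lia

end OrbitAverage

section KrylovBogolyubov

variable [TopologicalSpace X] [HasOuterApproxClosed X] [MeasurableSpace X] [BorelSpace X]
  {T : X → X} {L : Filter ℕ} {σ : ℕ → Measure X} [∀ n, IsProbabilityMeasure (σ n)]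

lemma measurePreserving_of_tendsto_orbitAverage [L.NeBot] (hL : L ≤ atTop) (hT : Continuous T)
    {ν : ℕ → ProbabilityMeasure X} (hν : ∀ᶠ n in L, (ν n : Measure X) = orbitAverage T n (σ n))
    {μ : ProbabilityMeasure X} (hlim : Tendsto ν L (𝓝 μ)) : MeasurePreserving T μ μ := by
  have hmap := ProbabilityMeasure.tendsto_map_of_tendsto_of_continuous ν μ hlim hT
  suffices h : Tendsto (fun n => (ν n).map hT.measurable.aemeasurable) L (𝓝 μ) by
    refine ⟨hT.measurable, ?_⟩
    simpa using congrArg ProbabilityMeasure.toMeasure (tendsto_nhds_unique hmap h)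
  rw [ProbabilityMeasure.tendsto_iff_forall_integral_tendsto] at hlim ⊢
  intro f
  refine (hlim f).congr_dist (squeeze_zero' (.of_forall fun _ => dist_nonneg) ?_
    ((tendsto_const_div_atTop_nhds_zero_nat (2 * ‖f‖)).mono_left hL))
  filter_upwards [hν] with n hn
  rw [dist_comm, Real.dist_eq, ProbabilityMeasure.toMeasure_map, hn]
  exact abs_integral_map_orbitAverage_sub_le hT.measurable n (σ n) f

theorem exists_measurePreserving_limsup_orbitAverage_le [CompactSpace X] [T2Space X]
    (hT : Continuous T) {𝓤 : Ultrafilter ℕ} (hU : (𝓤 : Filter ℕ) ≤ atTop) :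
    ∃ μ : Measure X, IsProbabilityMeasure μ ∧ MeasurePreserving T μ μ ∧
      ∀ K, IsClosed K → limsup (fun n => orbitAverage T n (σ n) K) 𝓤 ≤ μ K := by
  have hpos : ∀ᶠ n in (𝓤 : Filter ℕ), n ≠ 0 := hU (eventually_ne_atTop 0)
  obtain ⟨ν, hν⟩ : ∃ ν : ℕ → ProbabilityMeasure X,
      ∀ n ≠ 0, (ν n : Measure X) = orbitAverage T n (σ n) := by
    classical
    exact ⟨fun n => if hn : n ≠ 0 then
      ⟨_, isProbabilityMeasure_orbitAverage hT.measurable hn (σ n)⟩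
      else ⟨σ 0, inferInstance⟩, fun n hn => by simp [hn]⟩
  replace hν := hpos.mono hν
  obtain ⟨μ, -, hμ⟩ := isCompact_univ.ultrafilter_le_nhds (𝓤.map ν) (by simp)
  refine ⟨μ, inferInstance, measurePreserving_of_tendsto_orbitAverage hU hT hν hμ, fun K hK => ?_⟩
  calc limsup (fun n => orbitAverage T n (σ n) K) 𝓤
      = limsup (fun n => (ν n : Measure X) K) 𝓤 := limsup_congr (hν.mono fun n hn => by rw [hn])
    _ ≤ (μ : Measure X) K := ProbabilityMeasure.limsup_measure_closed_le_of_tendsto hμ hK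

end KrylovBogolyubov

section Katok

variable [PseudoMetricSpace X] {T : X → X} {ε δ : ℝ}

lemma exists_card_eq_spanNum [CompactSpace X] (T : X → X) (n : ℕ) (hε : 0 < ε) :
    ∃ E : Finset X, #E = spanNum T n ε univ ∧ ∀ z, ∃ y ∈ E, bowenDist T n z y < ε := by
  obtain ⟨F, -, hF⟩ := exists_isBowenSeparated_forall_bowenDist_lt T n hε
  obtain ⟨E, hcard, hE⟩ := Nat.sInf_mem
    (s := {k | ∃ E : Finset X, #E = k ∧ ∀ z ∈ univ, ∃ y ∈ E, bowenDist T n z y < ε})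
    ⟨#F, F, rfl, fun z _ => hF z⟩
  exact ⟨E, hcard, fun z => hE z (mem_univ z)⟩

variable [MeasurableSpace X]

lemma ofReal_one_sub_lt_measure_iUnion_bowenDist_lt (μ : Measure X) [IsProbabilityMeasure μ]
    {n : ℕ} {E : Finset X} (hE : ∀ z, ∃ y ∈ E, bowenDist T n z y < ε) (hδ : 0 < δ) :
    ENNReal.ofReal (1 - δ) < μ (⋃ x ∈ E, {y | bowenDist T n x y < ε}) := by
  have hcover : ⋃ x ∈ E, {y | bowenDist T n x y < ε} = univ := by
    refine eq_univ_of_forall fun z => ?_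
    obtain ⟨y, hy, hyz⟩ := hE z
    rw [bowenDist_comm] at hyz
    exact mem_biUnion hy hyz
  rw [hcover, measure_univ, ENNReal.ofReal_lt_one]
  linarith

lemma exists_card_eq_katokNum [CompactSpace X] (T : X → X) (μ : Measure X)
    [IsProbabilityMeasure μ] (n : ℕ) (hε : 0 < ε) (hδ : 0 < δ) :
    ∃ E : Finset X, #E = katokNum T μ n ε δ ∧
      ENNReal.ofReal (1 - δ) < μ (⋃ x ∈ E, {y | bowenDist T n x y < ε}) := by
  obtain ⟨F, -, hF⟩ := exists_isBowenSeparated_forall_bowenDist_lt T n hε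
  exact Nat.sInf_mem (s := {k | ∃ E : Finset X, #E = k ∧
    ENNReal.ofReal (1 - δ) < μ (⋃ x ∈ E, {y | bowenDist T n x y < ε})})
    ⟨#F, F, rfl, ofReal_one_sub_lt_measure_iUnion_bowenDist_lt μ hF hδ⟩

lemma katokNum_le_spanNum [CompactSpace X] (T : X → X) (μ : Measure X) [IsProbabilityMeasure μ]
    (n : ℕ) (hε : 0 < ε) (hδ : 0 < δ) : katokNum T μ n ε δ ≤ spanNum T n ε univ := by
  obtain ⟨E, hcard, hE⟩ := exists_card_eq_spanNum T n hε
  exact Nat.sInf_le ⟨E, hcard, ofReal_one_sub_lt_measure_iUnion_bowenDist_lt μ hE hδ⟩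

lemma monotone_log_natCast : Monotone fun n : ℕ => Real.log n := by
  intro k n hkn
  obtain rfl | hk := k.eq_zero_or_pos
  · simpa using Real.log_natCast_nonneg n
  · exact Real.log_le_log (by exact_mod_cast hk) (by exact_mod_cast hkn)

lemma katokUpper_le_spanGrowth [CompactSpace X] (T : X → X) (μ : Measure X)
    [IsProbabilityMeasure μ] (hε : 0 < ε) : katokUpper T μ ε ≤ spanGrowth T ε := by
  refine iSup₂_le fun δ hδ => limsup_le_limsup (.of_forall fun n => ?_)
  have hlog : Real.log (katokNum T μ n ε δ) ≤ Real.log (spanNum T n ε univ) :=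
    monotone_log_natCast (katokNum_le_spanNum T μ n hε hδ.1)
  dsimp only
  gcongr

lemma katokLower_le_katokUpper (T : X → X) (μ : Measure X) (ε : ℝ) :
    katokLower T μ ε ≤ katokUpper T μ ε :=
  iSup₂_mono fun _ _ => liminf_le_limsup

lemma ofReal_le_katokLower {μ : Measure X} {a b c : ℝ}
    (h : ∀ δ ∈ Ioo (0 : ℝ) 1, ∀ m : ℕ, 0 < m →
      c ≤ (a + Real.log (katokNum T μ m ε δ)) / m + 2 * δ * b) :
    ENNReal.ofReal c ≤ katokLower T μ ε := by
  have hδ (δ : ℝ) (hδ : δ ∈ Ioo (0 : ℝ) 1) :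
      ENNReal.ofReal (c - 2 * δ * b) ≤ katokLowerD T μ ε δ := by
    have hlim : Tendsto (fun m : ℕ => ENNReal.ofReal (c - 2 * δ * b - a / m)) atTop
        (𝓝 (ENNReal.ofReal (c - 2 * δ * b))) := by
      simpa using ENNReal.tendsto_ofReal
        ((tendsto_const_div_atTop_nhds_zero_nat a).const_sub (c - 2 * δ * b))
    rw [← hlim.liminf_eq]
    refine liminf_le_liminf ?_
    filter_upwards [eventually_gt_atTop 0] with m hm
    rw [← ENNReal.ofReal_natCast, ← ENNReal.ofReal_div_of_pos (by positivity)]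
    refine ENNReal.ofReal_le_ofReal ?_
    linarith [h δ hδ m hm, add_div a (Real.log (katokNum T μ m ε δ)) m]
  have hlim : Tendsto (fun δ => ENNReal.ofReal (c - 2 * δ * b)) (𝓝[>] 0) (𝓝 (ENNReal.ofReal c)) :=
    (ENNReal.tendsto_ofReal (Continuous.tendsto' (by fun_prop) _ _ (by simp))).mono_left
      nhdsWithin_le_nhds
  refine le_of_tendsto hlim ?_
  filter_upwards [Ioo_mem_nhdsGT one_pos] with δ hδ₀
  exact (hδ δ hδ₀).trans (le_iSup₂_of_le δ hδ₀ le_rfl)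

end Katok

section GrowthRate

variable {T : X → X}

lemma le_of_frequently_mul_le_add {a b c : ℝ} (h : ∃ᶠ n : ℕ in atTop, c * n ≤ a + n * b) :
    c ≤ b := by
  by_contra! hbc
  have hlarge : ∀ᶠ n : ℕ in atTop, a / (c - b) < n :=
    tendsto_natCast_atTop_atTop.eventually_gt_atTop _
  obtain ⟨n, hle, hlt⟩ := (h.and_eventually hlarge).exists
  rw [div_lt_iff₀ (sub_pos.2 hbc)] at hlt
  linarith

lemma IsBowenSeparated.log_card_le_of_orbitAverage_le [PseudoMetricSpace X] [MeasurableSpace X]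
    [MeasurableSingletonClass X] {C E F : Finset X} {V : Set X} {m n : ℕ} {ε δ : ℝ}
    (hF : IsBowenSeparated T n ε F) (hF₀ : F.Nonempty) (hT : Measurable T) (hm : 0 < m)
    (hn : n ≠ 0) (hε : 0 < ε) (hC : ∀ x, ∃ c ∈ C, dist c x < ε / 2)
    (hE : ∀ x ∉ V, ∃ y ∈ E, bowenDist T m y x < ε / 2) (hE₀ : E.Nonempty)
    (hV : MeasurableSet V) (hδ : 0 < δ)
    (hFV : orbitAverage T n (uniformOn (F : Set X)) V ≤ ENNReal.ofReal δ) :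
    Real.log #F ≤ Real.log 2 + m * Real.log #C +
      n * ((Real.log 2 + Real.log #E) / m + 2 * δ * Real.log (2 * #C)) := by
  have hC₀ : C.Nonempty := let ⟨x, _⟩ := hF₀; ⟨_, (hC x).choose_spec.1⟩
  have := hE₀.card_pos
  have := hC₀.card_pos
  set b := ⌊2 * (n * δ)⌋₊
  have hcard : #F ≤ 2 * (#C ^ m * (2 * #E) ^ (n / m) * (2 * #C) ^ b) :=
    (card_le_two_mul_card_filter_visitCount_le hT hn hV hδ hFV).trans <| Nat.mul_le_mul_left 2 <|
      (hF.mono (Finset.filter_subset _ F)).card_le_of_visitCount_le hm hε hC hE hE₀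
        fun x hx => (Finset.mem_filter.1 hx).2
  have hlogE : 0 ≤ Real.log (2 * #E) := by exact_mod_cast Real.log_natCast_nonneg (2 * #E)
  have hlogC : 0 ≤ Real.log (2 * #C) := by exact_mod_cast Real.log_natCast_nonneg (2 * #C)
  calc Real.log #F
      ≤ Real.log ((2 * (#C ^ m * (2 * #E) ^ (n / m) * (2 * #C) ^ b) : ℕ) : ℝ) :=
        monotone_log_natCast hcard
    _ = Real.log 2 + m * Real.log #C + (n / m : ℕ) * Real.log (2 * #E) +
          b * Real.log (2 * #C) := by
        push_cast
        rw [Real.log_mul (by positivity) (by positivity),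
          Real.log_mul (by positivity) (by positivity),
          Real.log_mul (by positivity) (by positivity), Real.log_pow, Real.log_pow, Real.log_pow]
        ring
    _ ≤ Real.log 2 + m * Real.log #C + n / m * Real.log (2 * #E) +
          2 * (n * δ) * Real.log (2 * #C) := by
        gcongr
        · exact Nat.cast_div_le
        · exact Nat.floor_le (by positivity)
    _ = _ := by rw [Real.log_mul two_ne_zero (by positivity)]; ring

lemma eventually_orbitAverage_compl_lt [TopologicalSpace X] [MeasurableSpace X]
    [OpensMeasurableSpace X] {L : Filter ℕ} {σ : ℕ → Measure X} {μ : Measure X}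
    [IsProbabilityMeasure μ]
    (hμ : ∀ K, IsClosed K → limsup (fun n => orbitAverage T n (σ n) K) L ≤ μ K)
    {U : Set X} (hU : IsOpen U) {δ : ℝ} (hUδ : ENNReal.ofReal (1 - δ) < μ U) :
    ∀ᶠ n in L, orbitAverage T n (σ n) Uᶜ < ENNReal.ofReal δ := by
  have hadd : (1 : ℝ≥0∞) ≤ ENNReal.ofReal δ + ENNReal.ofReal (1 - δ) := by
    simpa using ENNReal.ofReal_add_le (p := δ) (q := 1 - δ)
  have hcompl : μ Uᶜ < ENNReal.ofReal δ :=
    (prob_compl_lt_one_sub_of_lt_prob hUδ hU.measurableSet).trans_le (tsub_le_iff_right.2 hadd)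
  exact eventually_lt_of_limsup_lt ((hμ _ hU.isClosed_compl).trans_lt hcompl)

lemma le_log_katokNum_div_add [MetricSpace X] [CompactSpace X] [MeasurableSpace X]
    [BorelSpace X] (hT : Continuous T) {L : Filter ℕ} [L.NeBot] (hL : L ≤ atTop) {c ε : ℝ}
    (hε : 0 < ε) {F : ℕ → Finset X} (hF : ∀ n, IsBowenSeparated T n ε (F n))
    (hF₀ : ∀ n, (F n).Nonempty) (hcF : ∀ᶠ n in L, c * n ≤ Real.log #(F n)) {μ : Measure X}
    [IsProbabilityMeasure μ] (hμ : ∀ K, IsClosed K →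
      limsup (fun n => orbitAverage T n (uniformOn (F n : Set X)) K) L ≤ μ K)
    {C : Finset X} (hC : ∀ x, ∃ c ∈ C, dist c x < ε / 2) {δ : ℝ} (hδ : 0 < δ) {m : ℕ}
    (hm : 0 < m) :
    c ≤ (Real.log 2 + Real.log (katokNum T μ m (ε / 2) δ)) / m + 2 * δ * Real.log (2 * #C) := by
  obtain ⟨E, hcard, hE⟩ := exists_card_eq_katokNum T μ m (half_pos hε) hδ
  have hE₀ : E.Nonempty := by
    rw [Finset.nonempty_iff_ne_empty]
    rintro rfl
    simp at hE
  set U : Set X := ⋃ x ∈ E, {y | bowenDist T m x y < ε / 2}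
  have hU : IsOpen U := isOpen_iUnion_bowenDist_lt hT m (ε / 2) E
  rw [← hcard]
  refine le_of_frequently_mul_le_add (a := Real.log 2 + m * Real.log #C)
    (Frequently.filter_mono (Eventually.frequently ?_) hL)
  filter_upwards [hcF, hL (eventually_ne_atTop 0), eventually_orbitAverage_compl_lt hμ hU hE]
    with n hcn hn hUn
  exact hcn.trans <| (hF n).log_card_le_of_orbitAverage_le (hF₀ n) hT.measurable hm hn hε hC
    (fun x hx => by simpa [U] using hx) hE₀ hU.measurableSet.compl hδ hUn.le

end GrowthRate

section MainEstimate

lemma frequently_mul_le_log_card_of_lt_spanGrowth [PseudoMetricSpace X] {T : X → X} {ε : ℝ}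
    {c : NNReal} (hc : c < spanGrowth T ε) {F : ℕ → Finset X}
    (hF : ∀ n z, ∃ y ∈ F n, bowenDist T n z y < ε) :
    ∃ᶠ n in atTop, c * n ≤ Real.log #(F n) := by
  refine ((frequently_lt_of_lt_limsup (h := hc)).and_eventually (eventually_gt_atTop 0)).mono ?_
  rintro n ⟨hlt, hn⟩
  have hn' : (0 : ℝ) < n := by exact_mod_cast hn
  rw [← ENNReal.ofReal_natCast, ← ENNReal.ofReal_div_of_pos hn', ← ENNReal.ofReal_coe_nnreal,
    ENNReal.ofReal_lt_ofReal_iff_of_nonneg c.coe_nonneg, lt_div_iff₀ hn'] at hlt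
  exact hlt.le.trans (monotone_log_natCast (Nat.sInf_le ⟨F n, rfl, fun z _ => hF n z⟩))

theorem spanGrowth_le_iSup_katokLower [MetricSpace X] [CompactSpace X] [MeasurableSpace X]
    [BorelSpace X] {T : X → X} (hT : Continuous T) {ε : ℝ} (hε : 0 < ε) :
    spanGrowth T ε ≤ ⨆ (μ : Measure X) (_ : IsProbabilityMeasure μ) (_ : MeasurePreserving T μ μ),
      katokLower T μ (ε / 2) := by
  obtain _ | _ := isEmpty_or_nonempty X
  · have hzero (n : ℕ) : spanNum T n ε univ = 0 := Nat.sInf_eq_zero.2 (.inl ⟨∅, by simp⟩)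
    simp [spanGrowth, hzero]
  choose F hF hspan using fun n => exists_isBowenSeparated_forall_bowenDist_lt T n hε
  have hF₀ (n : ℕ) : (F n).Nonempty := ⟨_, (hspan n (Classical.arbitrary X)).choose_spec.1⟩
  have hprob (n : ℕ) : IsProbabilityMeasure (uniformOn (F n : Set X)) :=
    isProbabilityMeasure_uniformOn (F n).finite_toSet (hF₀ n)
  obtain ⟨C, hC⟩ := exists_finset_forall_dist_lt (X := X) (half_pos hε)
  refine ENNReal.le_of_forall_nnreal_lt fun c hc => ?_
  obtain ⟨𝓤, hU, hcU⟩ : ∃ 𝓤 : Ultrafilter ℕ, (𝓤 : Filter ℕ) ≤ atTop ∧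
      ∀ᶠ n in 𝓤, c * n ≤ Real.log #(F n) := by
    have := frequently_iff_neBot.1 (frequently_mul_le_log_card_of_lt_spanGrowth hc hspan)
    obtain ⟨𝓤, hle⟩ := Ultrafilter.exists_le (atTop ⊓ 𝓟 {n : ℕ | c * n ≤ Real.log #(F n)})
    exact ⟨𝓤, hle.trans inf_le_left, hle.trans inf_le_right (mem_principal_self _)⟩
  obtain ⟨μ, hμ₁, hinv, hμ⟩ := exists_measurePreserving_limsup_orbitAverage_le
    (σ := fun n => uniformOn (F n : Set X)) hT hU
  calc (c : ℝ≥0∞) = ENNReal.ofReal c := ENNReal.ofReal_coe_nnreal.symm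
    _ ≤ katokLower T μ (ε / 2) := ofReal_le_katokLower fun δ hδ m hm =>
      le_log_katokNum_div_add hT hU hε hF hF₀ hcU hμ hC hδ.1 hm
    _ ≤ _ := le_iSup_of_le μ (by rw [iSup_pos hμ₁, iSup_pos hinv])

end MainEstimate

section Scaling

variable {c : ℝ}

lemma map_const_mul_nhdsGT_zero (hc : 0 < c) : map (c * ·) (𝓝[>] (0 : ℝ)) = 𝓝[>] 0 := by
  have := (Homeomorph.mulLeft₀ c hc.ne').isEmbedding.map_nhdsWithin_eq (Ioi 0) 0
  simpa [image_const_mul_Ioi_zero hc] using this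

lemma tendsto_log_one_div_nhdsGT_zero :
    Tendsto (fun ε : ℝ => Real.log (1 / ε)) (𝓝[>] 0) atTop := by
  simp only [one_div]
  exact Real.tendsto_log_atTop.comp tendsto_inv_nhdsGT_zero

lemma tendsto_log_one_div_mul_div_log_one_div (hc : 0 < c) :
    Tendsto (fun ε : ℝ =>
      ENNReal.ofReal (Real.log (1 / (c * ε))) / ENNReal.ofReal (Real.log (1 / ε)))
      (𝓝[>] 0) (𝓝 1) := by
  have hlim : Tendsto (fun ε : ℝ => ENNReal.ofReal (1 - Real.log c / Real.log (1 / ε))) (𝓝[>] 0)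
      (𝓝 1) := by
    simpa using ENNReal.tendsto_ofReal
      ((tendsto_log_one_div_nhdsGT_zero.const_div_atTop (Real.log c)).const_sub 1)
  refine hlim.congr' ?_
  filter_upwards [self_mem_nhdsWithin, tendsto_log_one_div_nhdsGT_zero.eventually_gt_atTop 0]
    with ε (hε : 0 < ε) hlog
  have hmul : Real.log (1 / (c * ε)) = Real.log (1 / ε) - Real.log c := by
    rw [one_div, one_div, Real.log_inv, Real.log_inv, Real.log_mul hc.ne' hε.ne']
    ring
  rw [← ENNReal.ofReal_div_of_pos hlog, hmul, sub_div, div_self hlog.ne']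

lemma comp_const_mul_div_log_eventuallyEq (hc : 0 < c) (S : ℝ → ℝ≥0∞) :
    (fun ε => S (c * ε) / ENNReal.ofReal (Real.log (1 / ε))) =ᶠ[𝓝[>] 0]
      (fun ε => ENNReal.ofReal (Real.log (1 / (c * ε))) / ENNReal.ofReal (Real.log (1 / ε))) *
        (fun ε => S ε / ENNReal.ofReal (Real.log (1 / ε))) ∘ (c * ·) := by
  have hpos := tendsto_log_one_div_nhdsGT_zero.eventually_gt_atTop 0
  rw [← map_const_mul_nhdsGT_zero hc, eventually_map] at hpos
  filter_upwards [hpos] with ε hlog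
  have hlog₀ : ENNReal.ofReal (Real.log (1 / (c * ε))) ≠ 0 := (ENNReal.ofReal_pos.2 hlog).ne'
  rw [Pi.mul_apply, Function.comp_apply, mul_comm (_ / _), ← mul_div_assoc,
    ENNReal.div_mul_cancel hlog₀ ENNReal.ofReal_ne_top]

lemma limsup_comp_const_mul_div_log_le (hc : 0 < c) (S : ℝ → ℝ≥0∞) :
    limsup (fun ε => S (c * ε) / ENNReal.ofReal (Real.log (1 / ε))) (𝓝[>] 0) ≤
      limsup (fun ε => S ε / ENNReal.ofReal (Real.log (1 / ε))) (𝓝[>] 0) := by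
  have hone := (tendsto_log_one_div_mul_div_log_one_div hc).limsup_eq
  rw [limsup_congr (comp_const_mul_div_log_eventuallyEq hc S)]
  refine (ENNReal.limsup_mul_le' (.inl (hone ▸ one_ne_zero))
    (.inl (hone ▸ ENNReal.one_ne_top))).trans ?_
  rw [hone, one_mul, limsup_comp, map_const_mul_nhdsGT_zero hc]

lemma liminf_comp_const_mul_div_log_le (hc : 0 < c) (S : ℝ → ℝ≥0∞) :
    liminf (fun ε => S (c * ε) / ENNReal.ofReal (Real.log (1 / ε))) (𝓝[>] 0) ≤
      liminf (fun ε => S ε / ENNReal.ofReal (Real.log (1 / ε))) (𝓝[>] 0) := by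
  have hone := (tendsto_log_one_div_mul_div_log_one_div hc).limsup_eq
  rw [liminf_congr (comp_const_mul_div_log_eventuallyEq hc S)]
  refine (ENNReal.liminf_mul_le (.inl (hone ▸ one_ne_zero))
    (.inl (hone ▸ ENNReal.one_ne_top))).trans ?_
  rw [hone, one_mul, liminf_comp, map_const_mul_nhdsGT_zero hc]

theorem limsup_div_log_eq_of_le_of_le {G S : ℝ → ℝ≥0∞} (hc : 0 < c)
    (hGS : ∀ ε > 0, G ε ≤ S (c * ε)) (hSG : ∀ ε > 0, S ε ≤ G ε) :
    limsup (fun ε => G ε / ENNReal.ofReal (Real.log (1 / ε))) (𝓝[>] 0) =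
      limsup (fun ε => S ε / ENNReal.ofReal (Real.log (1 / ε))) (𝓝[>] 0) := by
  refine le_antisymm ((limsup_le_limsup ?_).trans (limsup_comp_const_mul_div_log_le hc S))
    (limsup_le_limsup ?_) <;> filter_upwards [self_mem_nhdsWithin] with ε hε
  · exact ENNReal.div_le_div_right (hGS ε hε) _
  · exact ENNReal.div_le_div_right (hSG ε hε) _

theorem liminf_div_log_eq_of_le_of_le {G S : ℝ → ℝ≥0∞} (hc : 0 < c)
    (hGS : ∀ ε > 0, G ε ≤ S (c * ε)) (hSG : ∀ ε > 0, S ε ≤ G ε) :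
    liminf (fun ε => G ε / ENNReal.ofReal (Real.log (1 / ε))) (𝓝[>] 0) =
      liminf (fun ε => S ε / ENNReal.ofReal (Real.log (1 / ε))) (𝓝[>] 0) := by
  refine le_antisymm ((liminf_le_liminf ?_).trans (liminf_comp_const_mul_div_log_le hc S))
    (liminf_le_liminf ?_) <;> filter_upwards [self_mem_nhdsWithin] with ε hε
  · exact ENNReal.div_le_div_right (hGS ε hε) _
  · exact ENNReal.div_le_div_right (hSG ε hε) _

end Scaling

end MMD

/-- Theorem 3.3 (with suprema over all invariant measures): variational principles for the
upper and lower metric mean dimensions in terms of the Katok entropies. -/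
theorem stmt7 {X : Type*} [MetricSpace X] [CompactSpace X] [MeasurableSpace X] [BorelSpace X]
    (T : X → X) (hT : Continuous T) :
    (mdimMUpper T = Filter.limsup (fun ε : ℝ =>
        (⨆ (μ : Measure X) (_ : IsProbabilityMeasure μ) (_ : MeasurePreserving T μ μ),
          katokLower T μ ε)
          / ENNReal.ofReal (Real.log (1 / ε))) (nhdsWithin 0 (Set.Ioi 0))) ∧
    (mdimMUpper T = Filter.limsup (fun ε : ℝ =>
        (⨆ (μ : Measure X) (_ : IsProbabilityMeasure μ) (_ : MeasurePreserving T μ μ),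
          katokUpper T μ ε)
          / ENNReal.ofReal (Real.log (1 / ε))) (nhdsWithin 0 (Set.Ioi 0))) ∧
    (mdimMLower T = Filter.liminf (fun ε : ℝ =>
        (⨆ (μ : Measure X) (_ : IsProbabilityMeasure μ) (_ : MeasurePreserving T μ μ),
          katokLower T μ ε)
          / ENNReal.ofReal (Real.log (1 / ε))) (nhdsWithin 0 (Set.Ioi 0))) ∧
    (mdimMLower T = Filter.liminf (fun ε : ℝ =>
        (⨆ (μ : Measure X) (_ : IsProbabilityMeasure μ) (_ : MeasurePreserving T μ μ),
          katokUpper T μ ε)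
          / ENNReal.ofReal (Real.log (1 / ε))) (nhdsWithin 0 (Set.Ioi 0))) := by
  have lower_le_upper (ε : ℝ) :
      ⨆ (μ : Measure X) (_ : IsProbabilityMeasure μ) (_ : MeasurePreserving T μ μ),
        katokLower T μ ε ≤
      ⨆ (μ : Measure X) (_ : IsProbabilityMeasure μ) (_ : MeasurePreserving T μ μ),
        katokUpper T μ ε :=
    iSup_mono fun μ => iSup₂_mono fun _ _ => katokLower_le_katokUpper T μ ε
  have upper_le_span (ε : ℝ) (hε : 0 < ε) :
      ⨆ (μ : Measure X) (_ : IsProbabilityMeasure μ) (_ : MeasurePreserving T μ μ),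
        katokUpper T μ ε ≤ spanGrowth T ε :=
    iSup_le fun μ => iSup₂_le fun _ _ => katokUpper_le_spanGrowth T μ hε
  have span_le_lower (ε : ℝ) (hε : 0 < ε) := spanGrowth_le_iSup_katokLower hT hε
  simp only [div_eq_inv_mul _ (2 : ℝ)] at span_le_lower
  have hc : (0 : ℝ) < 2⁻¹ := by positivity
  have lower_le_span (ε : ℝ) (hε : 0 < ε) := (lower_le_upper ε).trans (upper_le_span ε hε)
  have span_le_upper (ε : ℝ) (hε : 0 < ε) := (span_le_lower ε hε).trans (lower_le_upper _)
  exact ⟨limsup_div_log_eq_of_le_of_le hc span_le_lower lower_le_span,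
    limsup_div_log_eq_of_le_of_le hc span_le_upper upper_le_span,
    liminf_div_log_eq_of_le_of_le hc span_le_lower lower_le_span,
    liminf_div_log_eq_of_le_of_le hc span_le_upper upper_le_span⟩
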